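/- arXiv:2412.12952 — 5 statements merged into one kernel-verified Lean document; each statement's English description precedes it below -/
import Mathlib

section
/- Let G be a simple graph on n vertices and m edges with Laplacian eigenvalues μ₁ ≥ … ≥ μₙ, and set t = μ₁/n. Then Σ_{i=2}^{n} μᵢ² ≤ (2M₁(G) + 4m + n²)/2 − (1 − 2t(1 − t))·n²/2, where M₁(G) is the first Zagreb index of G. -/
/-!
By the spectral theorem `∑ μᵢ² = tr (L²)`, and since `L` is symmetric with diagonal entries `deg v`
and off-diagonal entries `0` or `-1`, this trace is `M₁(G) + 2m`. Removing `μ₁²`, the left-hand side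
is exactly `M₁(G) + 2m - μ₁²`, while the right-hand side, with `μ₁ = t n`, simplifies to
`M₁(G) + 2m + n μ₁ - μ₁²`. The inequality is therefore equivalent to `0 ≤ n μ₁`, which holds because
`L` is positive semidefinite.
-/

open Finset

theorem sum_sq_eigenvalues_eq_trace {ι : Type*} [Fintype ι] [DecidableEq ι]
    {A : Matrix ι ι ℝ} (hA : A.IsHermitian) :
    ∑ i, hA.eigenvalues i ^ 2 = (A * A).trace := by
  have h := hA.spectral_theorem
  conv_rhs => rw [h]
  rw [← map_mul, Unitary.conjStarAlgAut_apply, Matrix.trace_mul_cycle]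
  simp [Matrix.diagonal_mul_diagonal, Matrix.trace_diagonal, pow_two]

theorem trace_lapMatrix_mul_self {V : Type*} [Fintype V] [DecidableEq V]
    (G : SimpleGraph V) [DecidableRel G.Adj] :
    (G.lapMatrix ℝ * G.lapMatrix ℝ).trace
      = ∑ v, (G.degree v : ℝ) ^ 2 + 2 * (G.edgeFinset.card : ℝ) := by
  have hentry : ∀ v w, G.lapMatrix ℝ v w * G.lapMatrix ℝ w v
      = (if v = w then (G.degree v : ℝ) ^ 2 else 0) + (if G.Adj v w then 1 else 0) := by
    intro v w
    by_cases hvw : v = w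
    · subst hvw
      simp [SimpleGraph.lapMatrix, SimpleGraph.degMatrix, pow_two]
    · simp [SimpleGraph.lapMatrix, SimpleGraph.degMatrix, hvw, Ne.symm hvw, G.adj_comm w v]
      split_ifs <;> simp
  have hdeg : ∑ v, (G.degree v : ℝ) = 2 * (G.edgeFinset.card : ℝ) := by
    exact_mod_cast G.sum_degrees_eq_twice_card_edges
  simp only [Matrix.trace, Matrix.diag_apply, Matrix.mul_apply, hentry, Finset.sum_add_distrib,
    ← hdeg, G.degree_eq_sum_if_adj (R := ℝ)]
  simp

/-- For a simple graph `G` on `n` vertices and `m` edges with Laplacian eigenvalues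
`μ₁ ≥ … ≥ μₙ` and `t = μ₁ / n`, the sum `∑_{i=2}^{n} μᵢ²` is at most
`(2 M₁(G) + 4 m + n²)/2 − (1 − 2 t (1 − t)) n² / 2`, where `M₁(G) = ∑ᵥ deg(v)²`. -/
theorem statement4 {n m : ℕ} (G : SimpleGraph (Fin n)) [DecidableRel G.Adj]
    (hm : G.edgeFinset.card = m)
    (hL : (G.lapMatrix ℝ).IsHermitian)
    (μ : ℕ → ℝ)
    (hμeig : ∃ e : Fin n ≃ Fin n, ∀ j : Fin n, μ ((j : ℕ) + 1) = hL.eigenvalues (e j))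
    (hμdec : ∀ i j : ℕ, 1 ≤ i → i ≤ j → j ≤ n → μ j ≤ μ i)
    (t : ℝ) (ht : t = μ 1 / n) :
    ∑ i ∈ Finset.Icc 2 n, (μ i) ^ 2
      ≤ (2 * (∑ v : Fin n, (G.degree v : ℝ) ^ 2) + 4 * m + n ^ 2) / 2
        - (1 - 2 * t * (1 - t)) * n ^ 2 / 2 := by
  obtain ⟨e, he⟩ := hμeig
  -- The case `n = 0` is separate because then `μ 1` is not an eigenvalue and `μ 1 / n` is junk.
  rcases Nat.eq_zero_or_pos n with rfl | hn
  · simp only [Nat.reduceLeDiff, Finset.Icc_eq_empty, not_false_eq_true, Finset.sum_empty,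
      Finset.univ_eq_empty, Nat.cast_zero]
    have : (0 : ℝ) ≤ m := m.cast_nonneg
    linarith
  have hall : ∑ i ∈ Finset.Icc 1 n, μ i ^ 2
      = ∑ v, (G.degree v : ℝ) ^ 2 + 2 * (m : ℝ) := by
    rw [← hm, ← trace_lapMatrix_mul_self, ← sum_sq_eigenvalues_eq_trace hL,
      ← Equiv.sum_comp e, ← Finset.Ico_succ_right_eq_Icc, Finset.sum_Ico_eq_sum_range,
      Nat.succ_eq_succ, Nat.succ_sub_one, Finset.sum_range]
    exact Finset.sum_congr rfl fun j _ => by rw [add_comm 1, he]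
  have hsplit : μ 1 ^ 2 + ∑ i ∈ Finset.Icc 2 n, μ i ^ 2 = ∑ i ∈ Finset.Icc 1 n, μ i ^ 2 :=
    Finset.add_sum_Ioc_eq_sum_Icc (f := fun i => μ i ^ 2) hn
  have hμ1 : 0 ≤ μ 1 := by
    rw [show μ 1 = hL.eigenvalues (e ⟨0, hn⟩) from he ⟨0, hn⟩]
    exact (G.posSemidef_lapMatrix ℝ).eigenvalues_nonneg _
  have hn' : (0 : ℝ) < n := by exact_mod_cast hn
  have htn : t * n = μ 1 := by rw [ht]; field_simp
  have hprod : 0 ≤ μ 1 * n := by positivity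
  rw [← htn] at hsplit hprod
  nlinarith
end

section
/- Let G be a simple graph on n ≥ 2 vertices and m edges, and let 1 ≤ k ≤ n. Then the sum of the k largest Laplacian eigenvalues of G satisfies S_k(G) ≤ n + √((k − 1)·(2m²/(n − 1) + m·n + n²/4)). -/
/-!
The Laplacian `L` has `μ₁ ≤ n`: the form `xᵀLx` sums `(xᵢ - xⱼ)²` over the edges, and the same sum
over all pairs of vertices is `n‖x‖² - (∑ xᵢ)²`. By Cauchy–Schwarz the remaining `k - 1` eigenvalues sum
to at most `√((k - 1) ∑ μᵢ²)`, and `∑ μᵢ² = tr L² = ∑ dᵢ² + 2m`. De Caen's inequality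
`∑ dᵢ² ≤ m (2m/(n - 1) + n - 2)` then bounds `∑ μᵢ²` by `2m²/(n - 1) + mn`, so that the term `n²/4`
is not needed (except that for `n = 2` the version of de Caen's inequality below degenerates).

De Caen's inequality is the nonnegativity of the squared distance from the edge indicator
`(aᵢⱼ)_{i ≠ j}` to its orthogonal projection on the vectors of the form `(uᵢ + uⱼ)_{i ≠ j}`; the
projection is `(dᵢ + dⱼ - 2m/(n - 1)) / (n - 2)`.
-/

open Finset

/-- De Caen's inequality, multiplied by `2 (n - 2)`: here `a` is the adjacency matrix, `D = 2m` the
degree sum. -/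
lemma deCaen_aux {n : ℕ} (a : Fin n → Fin n → ℝ) (d : Fin n → ℝ) (D Q : ℝ)
    (hn : 2 ≤ n) (h01 : ∀ i j, a i j ^ 2 = a i j) (hsymm : ∀ i j, a i j = a j i)
    (hdiag : ∀ i, a i i = 0) (hd : ∀ i, ∑ j, a i j = d i)
    (hD : ∑ i, d i = D) (hQ : ∑ i, d i ^ 2 = Q) :
    0 ≤ ((n : ℝ) - 2) * (((n : ℝ) - 2) * D + D ^ 2 / ((n : ℝ) - 1) - 2 * Q) := by
  have hN : (0 : ℝ) < (n : ℝ) - 1 := by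
    have : (2 : ℝ) ≤ n := by exact_mod_cast hn
    linarith
  set s : ℝ := (n : ℝ) - 2 with hs
  set c : ℝ := D / ((n : ℝ) - 1) with hc
  have hDc : D = c * ((n : ℝ) - 1) := by rw [hc]; field_simp
  have row : ∀ i, ∑ j, (s * a i j - d i - d j + c) ^ 2
      = s ^ 2 * d i + n * (c - d i) ^ 2 + Q + 2 * s * (c - d i) * d i
        - 2 * s * (∑ j, a i j * d j) - 2 * (c - d i) * D := by
    intro i
    have : ∀ j, (s * a i j - d i - d j + c) ^ 2
        = s ^ 2 * a i j + (c - d i) ^ 2 + d j ^ 2 + 2 * s * (c - d i) * a i j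
          - 2 * s * (a i j * d j) - 2 * (c - d i) * d j := by
      intro j
      linear_combination s ^ 2 * h01 i j
    simp only [this, Finset.sum_sub_distrib, Finset.sum_add_distrib, ← Finset.mul_sum, hd, hD, hQ]
    simp
  -- The squared distance runs over `i ≠ j`: in each row of the full double sum, the diagonal term
  -- is discarded and the rest is nonnegative.
  have hdiagle : ∀ i, (c - 2 * d i) ^ 2 ≤ ∑ j, (s * a i j - d i - d j + c) ^ 2 := by
    intro i
    have h := Finset.single_le_sum (f := fun j => (s * a i j - d i - d j + c) ^ 2)
      (fun j _ => sq_nonneg _) (Finset.mem_univ i)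
    refine le_trans (le_of_eq ?_) h
    simp only [hdiag]
    ring
  have htot := Finset.sum_le_sum (fun i (_ : i ∈ Finset.univ) => hdiagle i)
  have hcross : ∑ i, ∑ j, a i j * d j = Q := by
    rw [Finset.sum_comm, ← hQ]
    refine Finset.sum_congr rfl fun j _ => ?_
    rw [← Finset.sum_mul, sq]
    congr 1
    rw [← hd j]
    exact Finset.sum_congr rfl fun i _ => hsymm i j
  have hl : ∑ i, (c - 2 * d i) ^ 2 = n * c ^ 2 - 4 * c * D + 4 * Q := by
    have : ∀ i, (c - 2 * d i) ^ 2 = c ^ 2 - 4 * c * d i + 4 * d i ^ 2 := fun i => by ring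
    simp only [this, Finset.sum_sub_distrib, Finset.sum_add_distrib, ← Finset.mul_sum, hD, hQ]
    simp
  have hr : ∑ i, ∑ j, (s * a i j - d i - d j + c) ^ 2
      = s ^ 2 * D + n * (n * c ^ 2 - 2 * c * D + Q) + n * Q + 2 * s * (c * D - Q) - 2 * s * Q
        - 2 * (n * c - D) * D := by
    have : ∀ i, ∑ j, (s * a i j - d i - d j + c) ^ 2
      = s ^ 2 * d i + n * c ^ 2 - (2 * n * c) * d i + n * d i ^ 2 + Q + (2 * s * c) * d i
        - (2 * s) * d i ^ 2
        - 2 * s * (∑ j, a i j * d j) - 2 * c * D + (2 * D) * d i := fun i => by rw [row]; ring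
    simp only [this, Finset.sum_sub_distrib, Finset.sum_add_distrib, ← Finset.mul_sum, hD, hQ,
      hcross]
    simp
    ring
  rw [hl, hr] at htot
  have hfin : D ^ 2 / ((n : ℝ) - 1) = c * D := by rw [hc]; ring
  rw [hfin]
  refine le_of_le_of_eq (sub_nonneg.mpr htot) ?_
  rw [hDc, hs]
  ring

/-- The sum of the squared eigenvalues is `tr A²`. -/
lemma sum_sq_eigenvalues {n : ℕ} (A : Matrix (Fin n) (Fin n) ℝ) (hA : A.IsHermitian) :
    ∑ i, hA.eigenvalues i ^ 2 = (A * A).trace := by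
  have h := hA.spectral_theorem
  conv_rhs => rw [h]
  rw [← map_mul, Unitary.conjStarAlgAut_apply, Matrix.trace_mul_comm, ← mul_assoc]
  simp [Matrix.trace, Matrix.diagonal_mul_diagonal, sq]

lemma trace_lapMatrix_sq {n : ℕ} (G : SimpleGraph (Fin n)) [DecidableRel G.Adj] :
    (G.lapMatrix ℝ * G.lapMatrix ℝ).trace
      = ∑ i, (G.degree i : ℝ) ^ 2 + ∑ i, (G.degree i : ℝ) := by
  rw [← Finset.sum_add_distrib, Matrix.trace]
  refine Finset.sum_congr rfl fun i _ => ?_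
  rw [Matrix.diag_apply, Matrix.mul_apply]
  have : ∀ j, G.lapMatrix ℝ i j * G.lapMatrix ℝ j i
      = (if i = j then (G.degree i : ℝ) ^ 2 else 0) + (if G.Adj i j then 1 else 0) := by
    intro j
    by_cases hij : i = j
    · subst hij
      simp [SimpleGraph.lapMatrix, SimpleGraph.degMatrix, sq]
    · have hji : ¬ j = i := fun h => hij h.symm
      by_cases hadj : G.Adj i j <;>
        simp [SimpleGraph.lapMatrix, SimpleGraph.degMatrix, Matrix.diagonal, hij, hji,
          hadj, G.adj_comm j i]
  simp only [this, Finset.sum_add_distrib, ← SimpleGraph.degree_eq_sum_if_adj]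
  simp

lemma lap_eigenvalue_le {n : ℕ} (G : SimpleGraph (Fin n)) [DecidableRel G.Adj]
    (hL : (G.lapMatrix ℝ).IsHermitian) (i : Fin n) : hL.eigenvalues i ≤ n := by
  set v : Fin n → ℝ := ⇑(hL.eigenvectorBasis i) with hv
  have hvv : v ⬝ᵥ v = 1 := by
    have h : ‖hL.eigenvectorBasis i‖ = 1 := hL.eigenvectorBasis.norm_eq_one i
    have h2 := EuclideanSpace.real_norm_sq_eq (hL.eigenvectorBasis i)
    rw [h] at h2
    simp only [dotProduct, hv, ← sq]
    linarith
  have hmul : (G.lapMatrix ℝ).mulVec v = hL.eigenvalues i • v := hL.mulVec_eigenvectorBasis i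
  have hq := G.lapMatrix_toLinearMap₂' ℝ v
  rw [Matrix.toLinearMap₂'_apply', hmul, dotProduct_smul, hvv] at hq
  have hle : (∑ i, ∑ j, if G.Adj i j then (v i - v j) ^ 2 else 0)
      ≤ ∑ i, ∑ j, (v i - v j) ^ 2 := by
    refine Finset.sum_le_sum fun i _ => Finset.sum_le_sum fun j _ => ?_
    split_ifs
    · exact le_rfl
    · positivity
  have hs : ∑ i, v i ^ 2 = 1 := by
    rw [← hvv]; simp [dotProduct, sq]
  have hall : ∑ i, ∑ j, (v i - v j) ^ 2 = 2 * n - 2 * (∑ i, v i) ^ 2 := by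
    have : ∀ i j, (v i - v j) ^ 2 = v i ^ 2 - 2 * (v i * v j) + v j ^ 2 := fun i j => by ring
    simp only [this, Finset.sum_sub_distrib, Finset.sum_add_distrib, ← Finset.mul_sum,
      ← Finset.sum_mul, hs]
    simp [← Finset.mul_sum, hs]
    ring
  have := sq_nonneg (∑ i, v i)
  simp only [smul_eq_mul, mul_one] at hq
  linarith

/-- Upper bound on the sum of the squared Laplacian eigenvalues. For `n > 2` it holds without the
term `n²/4`, by de Caen's inequality. -/
lemma degree_bound {n m : ℕ} (hn : 2 ≤ n) (G : SimpleGraph (Fin n)) [DecidableRel G.Adj]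
    (hm : G.edgeFinset.card = m) :
    ∑ i, (G.degree i : ℝ) ^ 2 + ∑ i, (G.degree i : ℝ)
      ≤ 2 * (m : ℝ) ^ 2 / ((n : ℝ) - 1) + m * n + (n : ℝ) ^ 2 / 4 := by
  have hD : ∑ i, (G.degree i : ℝ) = 2 * m := by
    rw [← hm]; exact_mod_cast G.sum_degrees_eq_twice_card_edges
  rcases hn.eq_or_lt with h2 | h3
  · -- With two vertices all degrees are `0` or `1`, so `∑ dᵢ² ≤ ∑ dᵢ = 2m`.
    have hdeg : ∑ i, (G.degree i : ℝ) ^ 2 ≤ ∑ i, (G.degree i : ℝ) := by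
      refine Finset.sum_le_sum fun i _ => ?_
      have hlt : G.degree i < n := by simpa using G.degree_lt_card_verts i
      have h1 : (G.degree i : ℝ) ≤ 1 := by exact_mod_cast (by omega : G.degree i ≤ 1)
      nlinarith [(Nat.cast_nonneg (G.degree i) : (0 : ℝ) ≤ _)]
    have hn2 : (n : ℝ) = 2 := by exact_mod_cast h2.symm
    rw [hn2]
    rw [hD] at hdeg ⊢
    norm_num
    nlinarith [sq_nonneg ((m : ℝ) - 1 / 2)]
  · have h := deCaen_aux (fun i j => if G.Adj i j then (1 : ℝ) else 0)
      (fun i => (G.degree i : ℝ)) (2 * m) (∑ i, (G.degree i : ℝ) ^ 2) hn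
      (fun i j => by split_ifs <;> simp) (fun i j => by simp [G.adj_comm]) (fun i => by simp)
      (fun i => (G.degree_eq_sum_if_adj i).symm) hD rfl
    have hpos : (0 : ℝ) < (n : ℝ) - 2 := by
      have : (2 : ℝ) < n := by exact_mod_cast h3
      linarith
    have h' := nonneg_of_mul_nonneg_right h hpos
    have e : (2 * (m : ℝ)) ^ 2 / ((n : ℝ) - 1) = 2 * (2 * (m : ℝ) ^ 2 / ((n : ℝ) - 1)) := by ring
    rw [e] at h'
    rw [hD]
    nlinarith [sq_nonneg (n : ℝ)]

/-- For a simple graph `G` on `n ≥ 2` vertices and `m` edges with Laplacian eigenvalues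
`μ₁ ≥ … ≥ μₙ` and `1 ≤ k ≤ n`, the sum of the `k` largest Laplacian eigenvalues satisfies
`S_k(G) ≤ n + √((k − 1)(2 m²/(n − 1) + m n + n²/4))`. -/
theorem statement7 {n m k : ℕ} (hn : 2 ≤ n) (G : SimpleGraph (Fin n)) [DecidableRel G.Adj]
    (hm : G.edgeFinset.card = m)
    (hL : (G.lapMatrix ℝ).IsHermitian)
    (μ : ℕ → ℝ)
    (hμeig : ∃ e : Fin n ≃ Fin n, ∀ j : Fin n, μ ((j : ℕ) + 1) = hL.eigenvalues (e j))
    (hμdec : ∀ i j : ℕ, 1 ≤ i → i ≤ j → j ≤ n → μ j ≤ μ i)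
    (hk1 : 1 ≤ k) (hkn : k ≤ n) :
    ∑ i ∈ Finset.Icc 1 k, μ i
      ≤ n + Real.sqrt ((k - 1) *
          (2 * (m : ℝ) ^ 2 / ((n : ℝ) - 1) + m * n + (n : ℝ) ^ 2 / 4)) := by
  obtain ⟨e, he⟩ := hμeig
  have h1 : μ 1 ≤ n := by
    have h := he ⟨0, by omega⟩
    simp only [zero_add] at h
    rw [h]
    exact lap_eigenvalue_le G hL _
  have hsq : ∑ i ∈ Finset.range n, μ (i + 1) ^ 2
      ≤ 2 * (m : ℝ) ^ 2 / ((n : ℝ) - 1) + m * n + (n : ℝ) ^ 2 / 4 := by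
    refine le_trans (le_of_eq ?_) (degree_bound hn G hm)
    rw [← trace_lapMatrix_sq, ← sum_sq_eigenvalues _ hL, ← Equiv.sum_comp e,
      ← Fin.sum_univ_eq_sum_range (fun i => μ (i + 1) ^ 2)]
    simp only [he]
  have hsplit : ∑ i ∈ Finset.Icc 1 k, μ i = μ 1 + ∑ i ∈ Finset.Icc 2 k, μ i := by
    rw [← Finset.add_sum_Ioc_eq_sum_Icc hk1]
    rfl
  have hcs := sq_sum_le_card_mul_sum_sq (s := Finset.Icc 2 k) (f := μ)
  have hcard : ((Finset.Icc 2 k).card : ℝ) = k - 1 := by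
    rw [Nat.card_Icc, show k + 1 - 2 = k - 1 by omega, Nat.cast_sub hk1, Nat.cast_one]
  have hsub : ∑ i ∈ Finset.Icc 2 k, μ i ^ 2 ≤ ∑ i ∈ Finset.range n, μ (i + 1) ^ 2 := by
    rw [Finset.range_eq_Ico, Finset.sum_Ico_add' (fun i => μ i ^ 2) 0 n 1]
    refine Finset.sum_le_sum_of_subset_of_nonneg (fun i hi => ?_) fun i _ _ => sq_nonneg _
    simp only [Finset.mem_Icc, Finset.mem_Ico] at hi ⊢
    omega
  have hk0 : (0 : ℝ) ≤ (k : ℝ) - 1 := by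
    have : (1 : ℝ) ≤ k := by exact_mod_cast hk1
    linarith
  rw [hcard] at hcs
  rw [hsplit]
  refine add_le_add h1 (Real.le_sqrt_of_sq_le (hcs.trans ?_))
  exact mul_le_mul_of_nonneg_left (hsub.trans hsq) hk0
end

section
/- Let G be a simple graph on n vertices and m edges with n ≤ m ≤ ((√3 − 1)/4)·(n − 1)·n, and let k be a natural number with ∛(8m²/(n − 1) + 4mn + n²) ≤ k ≤ n. Then the sum of the k largest Laplacian eigenvalues of G satisfies S_k(G) ≤ m + (k + 1 choose 2) = m + k(k + 1)/2. -/
open Finset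

/-!
The Laplacian matrix is positive semidefinite with trace `2 m`, so `S_k(G) ≤ 2 m` and it is enough
that `m ≤ k (k + 1) / 2`. Cubing the lower bound on `k` and keeping only the term `4 m n` gives
`4 m k ≤ 4 m n ≤ k ^ 3`, hence `4 m ≤ k ^ 2` when `k > 0`; for `k = 0` the sum is empty.
-/

/-- The Laplacian eigenvalues add up to the trace of the Laplacian, the sum of the degrees. -/
theorem sum_eigenvalues_lapMatrix {V : Type*} [Fintype V] [DecidableEq V] (G : SimpleGraph V)
    [DecidableRel G.Adj] (hL : (G.lapMatrix ℝ).IsHermitian) :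
    ∑ i, hL.eigenvalues i = 2 * (G.edgeFinset.card : ℝ) := by
  have h := hL.trace_eq_sum_eigenvalues
  have ht : (G.lapMatrix ℝ).trace = ∑ v, (G.degree v : ℝ) := by
    simp [SimpleGraph.lapMatrix, SimpleGraph.degMatrix, Matrix.trace_diagonal]
  have hd : ∑ v, (G.degree v : ℝ) = 2 * (G.edgeFinset.card : ℝ) := by
    exact_mod_cast G.sum_degrees_eq_twice_card_edges
  rw [← hd, ← ht, h]
  simp

/-- Brouwer's conjecture holds for simple graphs on `n` vertices with `m` edges where
`n ≤ m ≤ ((√3 − 1)/4)(n − 1) n`, for every natural number `k` with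
`∛(8 m²/(n − 1) + 4 m n + n²) ≤ k ≤ n`: the sum of the `k` largest Laplacian eigenvalues
satisfies `S_k(G) ≤ m + k(k + 1)/2`. -/
theorem statement10 {n m k : ℕ} (G : SimpleGraph (Fin n)) [DecidableRel G.Adj]
    (hm : G.edgeFinset.card = m)
    (hL : (G.lapMatrix ℝ).IsHermitian)
    (μ : ℕ → ℝ)
    (hμeig : ∃ e : Fin n ≃ Fin n, ∀ j : Fin n, μ ((j : ℕ) + 1) = hL.eigenvalues (e j))
    (hμdec : ∀ i j : ℕ, 1 ≤ i → i ≤ j → j ≤ n → μ j ≤ μ i)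
    (hnm : n ≤ m)
    (hmub : (m : ℝ) ≤ (Real.sqrt 3 - 1) / 4 * ((n : ℝ) - 1) * n)
    (hklb : (8 * (m : ℝ) ^ 2 / ((n : ℝ) - 1) + 4 * m * n + n ^ 2) ^ ((1 : ℝ) / 3) ≤ (k : ℝ))
    (hkn : k ≤ n) :
    ∑ i ∈ Finset.Icc 1 k, μ i ≤ (m : ℝ) + k * (k + 1) / 2 := by
  obtain ⟨e, he⟩ := hμeig
  have hpsd : (G.lapMatrix ℝ).PosSemidef := G.posSemidef_lapMatrix ℝ
  have hsum : ∑ i ∈ Finset.Icc 1 k, μ i ≤ 2 * (m : ℝ) := by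
    calc ∑ i ∈ Finset.Icc 1 k, μ i = ∑ j ∈ Finset.range k, μ (j + 1) := by
          rw [Finset.range_eq_Ico, Finset.sum_Ico_add' μ 0 k 1]
          rfl
      _ ≤ ∑ j ∈ Finset.range n, μ (j + 1) := by
          refine Finset.sum_le_sum_of_subset_of_nonneg (Finset.range_mono hkn) fun j hj _ => ?_
          have := he ⟨j, Finset.mem_range.1 hj⟩
          exact this ▸ hpsd.eigenvalues_nonneg _
      _ = ∑ j : Fin n, hL.eigenvalues (e j) := by
          rw [Finset.sum_range]
          exact Finset.sum_congr rfl fun j _ => he j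
      _ = 2 * (m : ℝ) := by
          rw [Equiv.sum_comp e hL.eigenvalues, sum_eigenvalues_lapMatrix G hL, hm]
  rcases Nat.eq_zero_or_pos k with rfl | hk
  · simp
  have hk' : (1 : ℝ) ≤ k := by exact_mod_cast hk
  have hkn' : (k : ℝ) ≤ n := by exact_mod_cast hkn
  have hm0 : (0 : ℝ) ≤ m := Nat.cast_nonneg m
  -- For `n = 1` the quotient is `x / 0 = 0`, so it is nonnegative there too.
  have hq : 0 ≤ 8 * (m : ℝ) ^ 2 / ((n : ℝ) - 1) :=
    div_nonneg (by positivity) (by linarith)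
  set B : ℝ := 8 * (m : ℝ) ^ 2 / ((n : ℝ) - 1) + 4 * m * n + n ^ 2 with hB
  have hB0 : 0 ≤ B := by positivity
  have hcube : B ≤ (k : ℝ) ^ 3 := by
    calc B = (B ^ ((1 : ℝ) / 3)) ^ 3 := by
          rw [← Real.rpow_natCast, ← Real.rpow_mul hB0]
          norm_num
      _ ≤ (k : ℝ) ^ 3 := by gcongr
  have h4 : 4 * (m : ℝ) * k ≤ (k : ℝ) ^ 2 * k := by
    have : (m : ℝ) * k ≤ m * n := mul_le_mul_of_nonneg_left hkn' hm0
    nlinarith [sq_nonneg (n : ℝ)]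
  have h5 : 4 * (m : ℝ) ≤ (k : ℝ) ^ 2 := le_of_mul_le_mul_right h4 (by linarith)
  nlinarith
end

section
/- Let n ≥ 2, m be natural numbers and let k be a real number with 1 ≤ k ≤ 1 + 8m²/(n²(n − 1)) + 4m/n. Then the function g(t) = n·t + √((k − 1)·(2m²/(n − 1) + m·n + n²·t(1 − t))) is monotonically increasing on the interval [0, 1]. -/
/-! Write `A = 2m²/(n-1) + mn`, `K = k - 1` and `X t = K (A + n² t (1 - t))`, the radicand. The upper
bound on `k` says exactly `K n² ≤ 4 A`, so `X t ≥ K A ≥ (K n / 2)²`, that is `√(X t) ≥ K n / 2`, on `[0, 1]`.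
With `d = t - s` one has `X s - X t = K n² d (s + t - 1) ≤ K n² d ≤ 2 n d √(X t)`, hence
`X s ≤ (n d + √(X t))²`, which is the claim. -/

/-- Monotonicity on `[0, 1]` for real parameters, under the condition `K n² ≤ 4 A`. -/
theorem mul_add_sqrt_le {N A K s t : ℝ} (hN : 0 ≤ N) (hK : 0 ≤ K) (hKA : K * N ^ 2 ≤ 4 * A)
    (hs : 0 ≤ s) (hst : s ≤ t) (ht : t ≤ 1) :
    N * s + Real.sqrt (K * (A + N ^ 2 * s * (1 - s)))
      ≤ N * t + Real.sqrt (K * (A + N ^ 2 * t * (1 - t))) := by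
  have ht0 : 0 ≤ N ^ 2 * t * (1 - t) :=
    mul_nonneg (mul_nonneg (sq_nonneg N) (hs.trans hst)) (sub_nonneg.2 ht)
  have hX : (K * N / 2) ^ 2 ≤ K * (A + N ^ 2 * t * (1 - t)) := by
    nlinarith [mul_le_mul_of_nonneg_left hKA hK, mul_nonneg hK ht0]
  have hr : K * N / 2 ≤ Real.sqrt (K * (A + N ^ 2 * t * (1 - t))) := Real.le_sqrt_of_sq_le hX
  have hsq := Real.sq_sqrt ((sq_nonneg _).trans hX)
  set r := Real.sqrt (K * (A + N ^ 2 * t * (1 - t)))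
  have hd : 0 ≤ N * (t - s) := mul_nonneg hN (sub_nonneg.2 hst)
  have key : Real.sqrt (K * (A + N ^ 2 * s * (1 - s))) ≤ N * (t - s) + r := by
    refine Real.sqrt_le_iff.2 ⟨add_nonneg hd (Real.sqrt_nonneg _), ?_⟩
    have h1 := mul_le_mul_of_nonneg_left hr hd
    have h2 : 0 ≤ K * N * (N * (t - s)) * (2 - s - t) :=
      mul_nonneg (mul_nonneg (mul_nonneg hK hN) hd) (by linarith)
    nlinarith [sq_nonneg (N * (t - s))]
  linarith

/-- For natural numbers `n ≥ 2`, `m ≥ 1` and a real `k` with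
`1 ≤ k ≤ 1 + 8 m²/(n² (n − 1)) + 4 m/n`, the function
`g(t) = n t + √((k − 1)(2 m²/(n − 1) + m n + n² t (1 − t)))` is monotonically
increasing on `[0, 1]`. -/
theorem statement11 (n m : ℕ) (hn : 2 ≤ n) (hm : 1 ≤ m) (k : ℝ) (hk1 : 1 ≤ k)
    (hk2 : k ≤ 1 + 8 * (m : ℝ) ^ 2 / ((n : ℝ) ^ 2 * ((n : ℝ) - 1)) + 4 * m / n) :
    ∀ s t : ℝ, 0 ≤ s → s ≤ t → t ≤ 1 →
      (n : ℝ) * s + Real.sqrt ((k - 1) *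
          (2 * (m : ℝ) ^ 2 / ((n : ℝ) - 1) + m * n + (n : ℝ) ^ 2 * s * (1 - s)))
        ≤ (n : ℝ) * t + Real.sqrt ((k - 1) *
          (2 * (m : ℝ) ^ 2 / ((n : ℝ) - 1) + m * n + (n : ℝ) ^ 2 * t * (1 - t))) := by
  intro s t hs hst ht
  have hN : (2 : ℝ) ≤ n := by exact_mod_cast hn
  have hN1 : (n : ℝ) - 1 ≠ 0 := by linarith
  have hN0 : (n : ℝ) ≠ 0 := by linarith
  refine mul_add_sqrt_le (by linarith) (by linarith) ?_ hs hst ht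
  have h : (8 * (m : ℝ) ^ 2 / ((n : ℝ) ^ 2 * ((n : ℝ) - 1)) + 4 * m / n) * (n : ℝ) ^ 2
      = 4 * (2 * (m : ℝ) ^ 2 / ((n : ℝ) - 1) + m * n) := by
    field_simp
    ring
  rw [← h]
  exact mul_le_mul_of_nonneg_right (by linarith) (sq_nonneg _)
end

section
/- Let G be a simple graph on n ≥ 2 vertices and m edges, and let k be a natural number with 1 ≤ k ≤ n and k ≤ 1 + 8m²/(n²(n − 1)) + 4m/n. Then the sum of the k largest Laplacian eigenvalues of G satisfies S_k(G) ≤ n + √((k − 1)·(2m²/(n − 1) + m·n)). -/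
/-!
The bound follows from two facts about the Laplacian spectrum.  First, every Laplacian eigenvalue is
at most `n`, since the quadratic form of `L(G)` is dominated by that of `L(Kₙ)`.  Secondly,
`∑ μᵢ² = tr L² = 2m + ∑ dᵢ²`, and de Caen's inequality `∑ dᵢ² ≤ m (2m/(n-1) + n - 2)` turns this into
`∑ μᵢ² ≤ 2m²/(n-1) + mn`.  Splitting off `μ₁ ≤ n` and applying Cauchy–Schwarz to the remaining
`k - 1` eigenvalues gives the claim.

De Caen's inequality is proved locally: with `s = ∑_{u ∼ v} d(u)` one has
`d(v)² + s ≤ d(v) (2m/(n-1) + n - 2)` for every vertex `v` (`degree_local_bound`); summing over `v`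
gives twice the desired inequality, because `∑_v ∑_{u ∼ v} d(u) = ∑ d(u)²`.  The local bound comes
from splitting `2m` as `d(v) + s + T`, where `T` is the degree sum over the vertices other than `v`
that are not adjacent to `v`, with `T ≥ 0` and `T ≥ s - d(v)²`.
-/

open Finset

/-- The arithmetic behind the local degree bound. It is linear in `s` on each side of `s = d²`,
so only the endpoints matter; integrality enters through `(x - d)² ≥ x - d`. -/
lemma local_arith (d x s T : ℤ) (hd : 0 ≤ d) (hdx : d ≤ x) (hs : s ≤ d * x)
    (hT : 0 ≤ T) (hT' : s - d ^ 2 ≤ T) :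
    (d ^ 2 + s + d - d * x) * x ≤ d * (d + s + T) := by
  have hg : 0 ≤ d * ((x - d) ^ 2 - (x - d)) := by
    apply mul_nonneg hd
    rcases hdx.eq_or_lt with h | h
    · simp [h]
    · have : 1 ≤ x - d := by omega
      nlinarith
  rcases le_total s (d ^ 2) with h | h
  · nlinarith [mul_nonneg (sub_nonneg.2 h) (sub_nonneg.2 hdx), mul_nonneg hd hT]
  · have h1 := mul_nonneg hd (sub_nonneg.2 hT')
    rcases le_total x (2 * d) with h2 | h2
    · nlinarith [mul_nonneg (sub_nonneg.2 h) (sub_nonneg.2 h2)]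
    · have h3 : 0 ≤ d * (d - 1) * (x - d) := by
        apply mul_nonneg _ (sub_nonneg.2 hdx)
        rcases hd.eq_or_lt with h | h
        · simp [← h]
        · exact mul_nonneg hd (by omega)
      nlinarith [mul_nonneg (sub_nonneg.2 hs) (sub_nonneg.2 h2)]

section Degrees

variable {V : Type*} [Fintype V] [DecidableEq V] (G : SimpleGraph V) [DecidableRel G.Adj]

/-- Double counting walks of length two from `v` by their endpoint. -/
lemma sum_degree_neighbors_eq (v : V) :
    ∑ u ∈ G.neighborFinset v, G.degree u
      = ∑ w, #(G.neighborFinset v ∩ G.neighborFinset w) := by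
  have h1 : ∀ u, G.degree u = ∑ w, if G.Adj u w then 1 else 0 := by
    intro u
    rw [← G.card_neighborFinset_eq_degree, G.neighborFinset_eq_filter, card_filter]
  have h2 : ∀ w, #(G.neighborFinset v ∩ G.neighborFinset w)
      = ∑ u ∈ G.neighborFinset v, if G.Adj u w then 1 else 0 := by
    intro w
    rw [← card_filter]
    congr 1
    ext u
    simp [G.adj_comm]
  simp_rw [h1, h2]
  exact sum_comm

lemma sum_eq_split (v : V) (f : V → ℕ) :
    ∑ w, f w = f v + ∑ u ∈ G.neighborFinset v, f u
      + ∑ u ∈ univ \ insert v (G.neighborFinset v), f u := by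
  rw [← sum_insert (by simp), add_comm, sum_sdiff (subset_univ _)]

/-- `d(v)² + ∑_{u ∼ v} d(u) ≤ d(v) (2m/(n-1) + n - 2)`, cleared of denominators. -/
lemma degree_local_bound (v : V) :
    ((G.degree v : ℤ) ^ 2 + (∑ u ∈ G.neighborFinset v, G.degree u : ℕ) + G.degree v
      - G.degree v * ((Fintype.card V : ℤ) - 1)) * ((Fintype.card V : ℤ) - 1)
      ≤ G.degree v * (∑ w, G.degree w : ℕ) := by
  have hlt : ∀ u, G.degree u + 1 ≤ Fintype.card V := fun u => G.degree_lt_card_verts u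
  set T := ∑ u ∈ univ \ insert v (G.neighborFinset v), G.degree u with hT
  set s := ∑ u ∈ G.neighborFinset v, G.degree u with hs
  have hsum : ∑ w, G.degree w = G.degree v + s + T := sum_eq_split G v _
  have hs1 : s ≤ G.degree v * (Fintype.card V - 1) := by
    rw [← G.card_neighborFinset_eq_degree, ← smul_eq_mul]
    exact sum_le_card_nsmul _ _ _ fun u _ => by have := hlt u; omega
  have hs2 : s ≤ G.degree v + G.degree v * (G.degree v - 1) + T := by
    rw [hs, sum_degree_neighbors_eq, sum_eq_split G v]
    gcongr
    · simp
    · calc _ ≤ #(G.neighborFinset v) • (G.degree v - 1) := by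
            apply sum_le_card_nsmul
            intro u hu
            -- `u` is a neighbor of `v` but not of itself
            have : #(G.neighborFinset v ∩ G.neighborFinset u) ≤ #((G.neighborFinset v).erase u) := by
              apply card_le_card
              intro w hw
              simp only [mem_inter, SimpleGraph.mem_neighborFinset, mem_erase] at hw ⊢
              exact ⟨hw.2.ne', hw.1⟩
            rwa [card_erase_of_mem hu, G.card_neighborFinset_eq_degree] at this
        _ = _ := by simp
    · refine sum_le_sum fun u _ => ?_
      rw [← G.card_neighborFinset_eq_degree]
      exact card_le_card inter_subset_right
  have hs2' : s ≤ G.degree v ^ 2 + T := by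
    refine hs2.trans (le_of_eq ?_)
    rcases G.degree v with _ | d
    · simp
    · simp only [Nat.add_sub_cancel]; ring
  rw [hsum]
  push_cast
  have hc := hlt v
  apply local_arith
  · positivity
  · omega
  · zify [show 1 ≤ Fintype.card V by omega] at hs1
    exact hs1
  · positivity
  · zify at hs2'
    linarith

lemma sum_sum_degree_neighbors :
    ∑ v, ∑ u ∈ G.neighborFinset v, G.degree u = ∑ u, G.degree u ^ 2 := by
  simp_rw [G.neighborFinset_eq_filter, sum_filter]
  rw [sum_comm]
  refine sum_congr rfl fun u _ => ?_
  simp_rw [G.adj_comm _ u]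
  rw [← sum_filter, ← G.neighborFinset_eq_filter, sum_const, G.card_neighborFinset_eq_degree,
    smul_eq_mul, sq]

/-- De Caen's inequality `∑ d² ≤ m (2m/(n-1) + n - 2)`. -/
lemma sum_degree_sq_le (hn : 2 ≤ Fintype.card V) :
    ∑ v, (G.degree v : ℝ) ^ 2 ≤ 2 * (#G.edgeFinset : ℝ) ^ 2 / ((Fintype.card V : ℝ) - 1)
      + #G.edgeFinset * ((Fintype.card V : ℝ) - 2) := by
  have h := sum_le_sum fun v (_ : v ∈ (univ : Finset V)) => degree_local_bound G v
  rw [← sum_mul, ← sum_mul, sum_sub_distrib, sum_add_distrib, sum_add_distrib, ← sum_mul,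
    ← Nat.cast_sum, ← Nat.cast_sum, sum_sum_degree_neighbors,
    G.sum_degrees_eq_twice_card_edges] at h
  have h' : (((∑ v, (G.degree v : ℝ) ^ 2) + ∑ v, (G.degree v : ℝ) ^ 2 + 2 * #G.edgeFinset
      - 2 * #G.edgeFinset * ((Fintype.card V : ℝ) - 1)) * ((Fintype.card V : ℝ) - 1))
      ≤ 2 * #G.edgeFinset * (2 * #G.edgeFinset) := by
    exact_mod_cast h
  have hx : (0 : ℝ) < (Fintype.card V : ℝ) - 1 := by
    have : (2 : ℝ) ≤ Fintype.card V := by exact_mod_cast hn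
    linarith
  rw [← sub_le_iff_le_add, le_div_iff₀ hx]
  nlinarith

end Degrees

section Spectrum

variable {V : Type*} [Fintype V] [DecidableEq V]

lemma sum_eigenvalues_sq {A : Matrix V V ℝ} (hA : A.IsHermitian) :
    ∑ i, hA.eigenvalues i ^ 2 = (A * A).trace := by
  conv_rhs => rw [hA.spectral_theorem, ← map_mul, Unitary.conjStarAlgAut_apply,
    Matrix.trace_mul_cycle, Unitary.coe_star_mul_self, one_mul, Matrix.diagonal_mul_diagonal,
    Matrix.trace_diagonal]
  simp [sq]

variable (G : SimpleGraph V) [DecidableRel G.Adj]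

lemma trace_lapMatrix_sq_s12 :
    (G.lapMatrix ℝ * G.lapMatrix ℝ).trace = ∑ v, (G.degree v : ℝ) ^ 2 + 2 * #G.edgeFinset := by
  have h2 : (2 * #G.edgeFinset : ℝ) = ∑ v, (G.degree v : ℝ) := by
    exact_mod_cast G.sum_degrees_eq_twice_card_edges.symm
  have h3 : (G.adjMatrix ℝ * G.adjMatrix ℝ).trace = ∑ v, (G.degree v : ℝ) := by
    simp only [Matrix.trace, Matrix.diag_apply, G.adjMatrix_mul_self_apply_self]
  rw [h2, ← h3, SimpleGraph.lapMatrix, SimpleGraph.degMatrix, sub_mul, mul_sub, mul_sub,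
    Matrix.diagonal_mul_diagonal]
  have h4 : (Matrix.diagonal (fun v => (G.degree v : ℝ)) * G.adjMatrix ℝ).trace = 0 := by
    simp only [Matrix.trace, Matrix.diag_apply, Matrix.diagonal_mul]
    simp
  have h5 : (G.adjMatrix ℝ * Matrix.diagonal (fun v => (G.degree v : ℝ))).trace = 0 := by
    rw [Matrix.trace_mul_comm, h4]
  simp_rw [Matrix.trace_sub, h4, h5, Matrix.trace_diagonal, ← sq]
  ring

/-- The Laplacian form of `G` is dominated by that of the complete graph, which is
`n ‖x‖² - (∑ xᵢ)² ≤ n ‖x‖²`. -/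
lemma lapMatrix_form_le (x : V → ℝ) :
    Matrix.toLinearMap₂' ℝ (G.lapMatrix ℝ) x x ≤ Fintype.card V * ∑ i, x i ^ 2 := by
  rw [G.lapMatrix_toLinearMap₂' ℝ]
  have h1 : ∑ i, ∑ j, (if G.Adj i j then (x i - x j) ^ 2 else 0) ≤ ∑ i, ∑ j, (x i - x j) ^ 2 := by
    gcongr with i _ j _
    split_ifs
    · exact le_rfl
    · positivity
  have h2 : ∑ i, ∑ j, (x i - x j) ^ 2
      = 2 * (Fintype.card V * ∑ i, x i ^ 2) - 2 * (∑ i, x i) ^ 2 := by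
    simp_rw [sub_sq, sum_add_distrib, sum_sub_distrib, ← mul_sum, sum_const, card_univ,
      nsmul_eq_mul, ← sum_mul, ← mul_sum]
    ring
  nlinarith [sq_nonneg (∑ i, x i)]

lemma lapMatrix_eigenvalues_le (hL : (G.lapMatrix ℝ).IsHermitian) (i : V) :
    hL.eigenvalues i ≤ Fintype.card V := by
  have h := lapMatrix_form_le G (hL.eigenvectorBasis i).ofLp
  have hnorm : ∑ j, (hL.eigenvectorBasis i).ofLp j ^ 2 = 1 := by
    rw [← EuclideanSpace.real_norm_sq_eq, hL.eigenvectorBasis.norm_eq_one, one_pow]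
  rw [Matrix.toLinearMap₂'_apply', hL.mulVec_eigenvectorBasis, dotProduct_smul, hnorm] at h
  have : (hL.eigenvectorBasis i).ofLp ⬝ᵥ (hL.eigenvectorBasis i).ofLp = 1 := by
    rw [← hnorm]
    simp [dotProduct, sq]
  simpa [this] using h

end Spectrum

/-- For a simple graph `G` on `n ≥ 2` vertices and `m` edges, and a natural number `k`
with `1 ≤ k ≤ n` and `k ≤ 1 + 8 m²/(n² (n − 1)) + 4 m/n`, the sum of the `k` largest
Laplacian eigenvalues satisfies `S_k(G) ≤ n + √((k − 1)(2 m²/(n − 1) + m n))`. -/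
theorem statement12 {n m k : ℕ} (hn : 2 ≤ n) (G : SimpleGraph (Fin n)) [DecidableRel G.Adj]
    (hm : G.edgeFinset.card = m)
    (hL : (G.lapMatrix ℝ).IsHermitian)
    (μ : ℕ → ℝ)
    (hμeig : ∃ e : Fin n ≃ Fin n, ∀ j : Fin n, μ ((j : ℕ) + 1) = hL.eigenvalues (e j))
    (hμdec : ∀ i j : ℕ, 1 ≤ i → i ≤ j → j ≤ n → μ j ≤ μ i)
    (hk1 : 1 ≤ k) (hkn : k ≤ n)
    (hkub : (k : ℝ) ≤ 1 + 8 * (m : ℝ) ^ 2 / ((n : ℝ) ^ 2 * ((n : ℝ) - 1)) + 4 * m / n) :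
    ∑ i ∈ Finset.Icc 1 k, μ i
      ≤ (n : ℝ) + Real.sqrt (((k : ℝ) - 1) *
          (2 * (m : ℝ) ^ 2 / ((n : ℝ) - 1) + m * n)) := by

  obtain ⟨e, he⟩ := hμeig
  have hn' : (2 : ℝ) ≤ n := by exact_mod_cast hn
  set M : ℝ := 2 * (m : ℝ) ^ 2 / ((n : ℝ) - 1) + m * n with hM
  have hsq : ∑ i ∈ Icc 1 n, μ i ^ 2 ≤ M := by
    have h1 : ∑ i ∈ Icc 1 n, μ i ^ 2 = ∑ i, hL.eigenvalues i ^ 2 := by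
      rw [← Equiv.sum_comp e]
      simp_rw [← he]
      rw [Fin.sum_univ_eq_sum_range (fun j => μ (j + 1) ^ 2), range_eq_Ico,
        sum_Ico_add' (fun j => μ j ^ 2)]
      rfl
    have h2 := sum_degree_sq_le G (by simpa using hn)
    rw [h1, sum_eigenvalues_sq, trace_lapMatrix_sq_s12]
    simp only [hm, Fintype.card_fin] at h2 ⊢
    rw [hM]
    linarith
  have hμ1 : μ 1 ≤ n := by
    have h := he ⟨0, by omega⟩
    simp only [zero_add] at h
    rw [h]
    simpa using lapMatrix_eigenvalues_le G hL (e ⟨0, by omega⟩)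
  have hrest : ∑ i ∈ Ioc 1 k, μ i ≤ Real.sqrt (((k : ℝ) - 1) * M) := by
    apply Real.le_sqrt_of_sq_le
    refine (sq_sum_le_card_mul_sum_sq).trans ?_
    rw [Nat.card_Ioc, Nat.cast_sub hk1, Nat.cast_one]
    have : (1 : ℝ) ≤ k := by exact_mod_cast hk1
    refine mul_le_mul_of_nonneg_left (le_trans ?_ hsq) (by linarith)
    refine sum_le_sum_of_subset_of_nonneg (fun i hi => ?_) fun _ _ _ => sq_nonneg _
    simp only [mem_Ioc, mem_Icc] at hi ⊢
    omega
  rw [← add_sum_Ioc_eq_sum_Icc hk1]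
  exact add_le_add hμ1 hrest
end
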